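/- arXiv:2405.20010 — 6 statements merged into one kernel-verified Lean document; each statement's English description precedes it below -/
import Mathlib

section
/- A flow with respect to a system of half-spaces crosses each hyperplane at most once; consequently every flow has length at most n. Precisely: let α_1,…,α_n be nonzero linear forms on ℝ^ℓ with ⋂_{i=1}^n ker α_i = {0} and ε ∈ {+1,−1}^n. If (C_0, C_1, …, C_k) is a flow with respect to h(ε), with C_{p−1} and C_p separated by the unique hyperplane H_{i_p}, then the indices i_1,…,i_k are pairwise distinct; in particular k ≤ n. -/
noncomputable section

/-- Real vector space `ℝ^ℓ`. -/
abbrev Vsp (ℓ : ℕ) : Type := EuclideanSpace ℝ (Fin ℓ)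

/-- The complement of the union of the hyperplanes `ker (α i)`. -/
def cmpl {ℓ n : ℕ} (α : Fin n → (Vsp ℓ →ₗ[ℝ] ℝ)) : Set (Vsp ℓ) := {x | ∀ i, α i x ≠ 0}

/-- `C` is a chamber: a connected component of the complement of the arrangement. -/
def IsChamber {ℓ n : ℕ} (α : Fin n → (Vsp ℓ →ₗ[ℝ] ℝ)) (C : Set (Vsp ℓ)) : Prop :=
  ∃ x ∈ cmpl α, C = connectedComponentIn (cmpl α) x

/-- The linear form `f` takes the same sign on `C` and `C'`. -/
def SameSign {ℓ : ℕ} (f : Vsp ℓ →ₗ[ℝ] ℝ) (C C' : Set (Vsp ℓ)) : Prop :=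
  ((∀ x ∈ C, 0 < f x) ∧ (∀ x ∈ C', 0 < f x)) ∨ ((∀ x ∈ C, f x < 0) ∧ (∀ x ∈ C', f x < 0))

/-- The linear form `f` takes opposite signs on `C` and `C'`. -/
def OppositeSign {ℓ : ℕ} (f : Vsp ℓ →ₗ[ℝ] ℝ) (C C' : Set (Vsp ℓ)) : Prop :=
  ((∀ x ∈ C, 0 < f x) ∧ (∀ x ∈ C', f x < 0)) ∨ ((∀ x ∈ C, f x < 0) ∧ (∀ x ∈ C', 0 < f x))

/-- The chambers `C` and `C'` are adjacent, separated by the unique hyperplane `ker (α j)`. -/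
def SeparatedBy {ℓ n : ℕ} (α : Fin n → (Vsp ℓ →ₗ[ℝ] ℝ)) (j : Fin n)
    (C C' : Set (Vsp ℓ)) : Prop :=
  IsChamber α C ∧ IsChamber α C' ∧ OppositeSign (α j) C C' ∧
    ∀ m : Fin n, m ≠ j → SameSign (α m) C C'

/-!
Along a flow, the set of half-spaces `H_i^{ε_i}` containing the current chamber only grows: a step
across `H_j` ends inside `H_j^{ε_j}` and keeps its side of every other hyperplane. Since that step
also starts outside `H_j^{ε_j}`, the hyperplane `H_j` cannot be crossed again.
-/

theorem IsChamber.nonempty {ℓ n : ℕ} {α : Fin n → (Vsp ℓ →ₗ[ℝ] ℝ)} {C : Set (Vsp ℓ)}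
    (hC : IsChamber α C) : C.Nonempty := by
  obtain ⟨x, hx, rfl⟩ := hC
  exact ⟨x, mem_connectedComponentIn hx⟩

section Sign

variable {ℓ : ℕ} {f : Vsp ℓ →ₗ[ℝ] ℝ} {C C' : Set (Vsp ℓ)} {x y : Vsp ℓ} {c : ℝ}

theorem SameSign.const_mul_pos (h : SameSign f C C') (hx : x ∈ C) (hy : y ∈ C')
    (hc : 0 < c * f x) : 0 < c * f y := by
  rcases h with ⟨hpos, hpos'⟩ | ⟨hneg, hneg'⟩
  · exact mul_pos (pos_of_mul_pos_left hc (hpos x hx).le) (hpos' y hy)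
  · exact mul_pos_of_neg_of_neg (neg_of_mul_pos_left hc (hneg x hx).le) (hneg' y hy)

theorem OppositeSign.const_mul_neg (h : OppositeSign f C C') (hx : x ∈ C) (hy : y ∈ C')
    (hc : 0 < c * f x) : c * f y < 0 := by
  rcases h with ⟨hpos, hneg'⟩ | ⟨hneg, hpos'⟩
  · exact mul_neg_of_pos_of_neg (pos_of_mul_pos_left hc (hpos x hx).le) (hneg' y hy)
  · exact mul_neg_of_neg_of_pos (neg_of_mul_pos_left hc (hneg x hx).le) (hpos' y hy)

end Sign

section HalfSpaces

variable {X ι : Type*} {H : ι → Set X} {j : ι} {C C' : Set X}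

/-- One step of a flow with respect to a system `H` of half-spaces: passing from `C` to `C'` enters
`H j` and leaves no other half-space. The `H i` may be arbitrary sets; for an arrangement, `H i` is
the half-space `H_i^{ε_i}`. -/
structure IsFlowStep (H : ι → Set X) (j : ι) (C C' : Set X) : Prop where
  source_not_subset : ¬C ⊆ H j
  target_subset : C' ⊆ H j
  subset_of_ne : ∀ m ≠ j, C ⊆ H m → C' ⊆ H m

/-- The indices of the half-spaces of the system `H` that contain `C`: the quantity that grows
along a flow. -/
def halfSpacesContaining (H : ι → Set X) (C : Set X) : Set ι := {m | C ⊆ H m}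

theorem IsFlowStep.halfSpacesContaining_subset (h : IsFlowStep H j C C') :
    halfSpacesContaining H C ⊆ halfSpacesContaining H C' := by
  intro m hm
  by_cases hmj : m = j
  · exact hmj ▸ h.target_subset
  · exact h.subset_of_ne m hmj hm

theorem injective_of_mem_succ_of_notMem_castSucc {k : ℕ} {S : Fin (k + 1) → Set ι}
    (hS : Monotone S) {i : Fin k → ι} (hmem : ∀ p, i p ∈ S p.succ)
    (hnotMem : ∀ p, i p ∉ S p.castSucc) : Function.Injective i := by
  refine Function.Injective.of_lt_imp_ne fun p q hpq heq => hnotMem q ?_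
  have hle : p.succ ≤ q.castSucc := Fin.succ_le_castSucc_iff.2 hpq
  exact heq ▸ hS hle (hmem p)

theorem flow_crosses_each_hyperplane_once_general {k : ℕ} {C : Fin (k + 1) → Set X}
    {idx : Fin k → ι} (hflow : ∀ p, IsFlowStep H (idx p) (C p.castSucc) (C p.succ)) :
    Function.Injective idx := by
  have hmono : Monotone fun p => halfSpacesContaining H (C p) :=
    Fin.monotone_iff_le_succ.2 fun p => (hflow p).halfSpacesContaining_subset
  exact injective_of_mem_succ_of_notMem_castSucc hmono (fun p => (hflow p).target_subset)
    fun p => (hflow p).source_not_subset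

end HalfSpaces

theorem SeparatedBy.isFlowStep {ℓ n : ℕ} {α : Fin n → (Vsp ℓ →ₗ[ℝ] ℝ)} {ε : Fin n → ℝ} {j : Fin n}
    {C C' : Set (Vsp ℓ)} (h : SeparatedBy α j C C') (hC' : C' ⊆ {x | 0 < ε j * α j x}) :
    IsFlowStep (fun i => {x | 0 < ε i * α i x}) j C C' := by
  obtain ⟨hchamber, hchamber', hopposite, hsame⟩ := h
  obtain ⟨x, hx⟩ := hchamber.nonempty
  obtain ⟨y, hy⟩ := hchamber'.nonempty
  exact
    { source_not_subset := fun hC => (hopposite.const_mul_neg hx hy (hC hx)).not_gt (hC' hy)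
      target_subset := hC'
      subset_of_ne := fun m hm hC _ hz => (hsame m hm).const_mul_pos hx hz (hC hx) }

/-- A flow with respect to a system of half-spaces crosses each hyperplane at most once;
consequently every flow has length at most `n`. -/
theorem flow_crosses_each_hyperplane_once (ℓ n : ℕ) (α : Fin n → (Vsp ℓ →ₗ[ℝ] ℝ))
    (hα : ∀ i, α i ≠ 0)
    (hess : (⋂ i, (LinearMap.ker (α i) : Set (Vsp ℓ))) = {0})
    (ε : Fin n → ℝ) (hε : ∀ i, ε i = 1 ∨ ε i = -1)
    (k : ℕ) (C : Fin (k + 1) → Set (Vsp ℓ)) (idx : Fin k → Fin n)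
    (hflow : ∀ p : Fin k,
      SeparatedBy α (idx p) (C p.castSucc) (C p.succ) ∧
      C p.succ ⊆ {x | 0 < ε (idx p) * α (idx p) x}) :
    Function.Injective idx ∧ k ≤ n := by
  have hinj : Function.Injective idx :=
    flow_crosses_each_hyperplane_once_general fun p => (hflow p).1.isFlowStep (hflow p).2
  exact ⟨hinj, by simpa using Fintype.card_le_of_injective idx hinj⟩
end
end

section
/- The assignment ε ↦ ⋂_{i=1}^n H_i^{ε_i} is a bijection between the set of consistent sign vectors and the set of chambers. Precisely: let α_1,…,α_n be nonzero linear forms on ℝ^ℓ with ⋂_{i=1}^n ker α_i = {0}. Then the map sending a sign vector ε ∈ {+1,−1}^n with ⋂_{i=1}^n H_i^{ε_i} ≠ ∅ to the chamber ⋂_{i=1}^n H_i^{ε_i} is well defined and bijective onto the set of connected components of ℝ^ℓ ∖ ⋃_{i=1}^n H_i. -/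
noncomputable section

/-!
Each sign region is convex, hence preconnected, and avoids every hyperplane. Conversely, along a
connected set avoiding the hyperplanes no form can change sign, by the intermediate value theorem.
So a nonempty sign region is the component of each of its points `x`, and its sign vector is
recovered as `i ↦ sign (α i x)`.
-/

lemma lt_of_isPreconnected_of_ne {X R : Type*} [TopologicalSpace X] [LinearOrder R]
    [TopologicalSpace R] [OrderClosedTopology R] {s : Set X} {g : X → R} {c : R} {x y : X}
    (hs : IsPreconnected s) (hg : ContinuousOn g s) (hne : ∀ z ∈ s, g z ≠ c)
    (hx : x ∈ s) (hy : y ∈ s) (hcx : c < g x) : c < g y := by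
  by_contra! hyc
  obtain ⟨z, hz, hzc⟩ := hs.intermediate_value hy hx hg ⟨hyc, hcx.le⟩
  exact hne z hz hzc

lemma eq_sign_of_mul_pos {R : Type*} [Ring R] [LinearOrder R] [IsStrictOrderedRing R] {e a : R}
    (he : e = 1 ∨ e = -1) (hea : 0 < e * a) : e = SignType.sign a := by
  rcases he with rfl | rfl
  · simp [sign_pos (show 0 < a by simpa using hea)]
  · simp [sign_neg (show a < 0 by simpa using hea)]

section Functions

variable {ι X : Type*}

/-- The common nonvanishing locus of the family `f`. For linear or affine forms it is the complement
of the arrangement of hyperplanes `f i = 0`. -/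
def nonvanishingLocus (f : ι → X → ℝ) : Set X := {x | ∀ i, f i x ≠ 0}

/-- The set `⋂ i, H_i^{ε_i}` of points where each `f i` has the sign of `ε i`. Sign vectors are
encoded as arbitrary real vectors `ε`; the region is empty as soon as some `ε i` is zero. -/
def signRegion (f : ι → X → ℝ) (ε : ι → ℝ) : Set X := ⋂ i, {x | 0 < ε i * f i x}

/-- The vectors with entries `1` or `-1` that are the signs of the family `f` at some point. -/
def consistentSignVectors (f : ι → X → ℝ) : Set (ι → ℝ) :=
  {ε | (∀ i, ε i = 1 ∨ ε i = -1) ∧ (signRegion f ε).Nonempty}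

/-- The chambers of the family `f`: the connected components of its nonvanishing locus. -/
def chambers [TopologicalSpace X] (f : ι → X → ℝ) : Set (Set X) :=
  {C | ∃ x ∈ nonvanishingLocus f, C = connectedComponentIn (nonvanishingLocus f) x}

variable {f : ι → X → ℝ} {ε : ι → ℝ} {x : X}

lemma mem_signRegion : x ∈ signRegion f ε ↔ ∀ i, 0 < ε i * f i x := Set.mem_iInter

lemma signRegion_subset_nonvanishingLocus : signRegion f ε ⊆ nonvanishingLocus f :=
  fun _ hx i => right_ne_zero_of_mul (mem_signRegion.1 hx i).ne'

lemma eq_sign_of_mem_signRegion (hε : ∀ i, ε i = 1 ∨ ε i = -1) (hx : x ∈ signRegion f ε) :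
    ε = fun i => (SignType.sign (f i x) : ℝ) :=
  funext fun i => eq_sign_of_mul_pos (hε i) (mem_signRegion.1 hx i)

lemma mem_signRegion_sign (hx : x ∈ nonvanishingLocus f) :
    x ∈ signRegion f fun i => (SignType.sign (f i x) : ℝ) :=
  mem_signRegion.2 fun i => by simpa only [sign_mul_self, abs_pos] using hx i

lemma sign_mem_consistentSignVectors (hx : x ∈ nonvanishingLocus f) :
    (fun i => (SignType.sign (f i x) : ℝ)) ∈ consistentSignVectors f := by
  refine ⟨fun i => ?_, x, mem_signRegion_sign hx⟩
  rcases (hx i).lt_or_gt with hneg | hpos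
  · simp [sign_neg hneg]
  · simp [sign_pos hpos]

lemma injOn_signRegion_consistentSignVectors :
    Set.InjOn (signRegion f) (consistentSignVectors f) := by
  rintro ε ⟨hε, x, hxε⟩ δ ⟨hδ, -⟩ hεδ
  have hxδ : x ∈ signRegion f δ := hεδ ▸ hxε
  exact (eq_sign_of_mem_signRegion hε hxε).trans (eq_sign_of_mem_signRegion hδ hxδ).symm

variable [TopologicalSpace X]

lemma subset_signRegion_of_isPreconnected {s : Set X} (hf : ∀ i, Continuous (f i))
    (hs : IsPreconnected s) (hsf : s ⊆ nonvanishingLocus f) (hxs : x ∈ s)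
    (hx : x ∈ signRegion f ε) : s ⊆ signRegion f ε := by
  refine fun y hy => mem_signRegion.2 fun i => ?_
  have hxi : 0 < ε i * f i x := mem_signRegion.1 hx i
  have hne : ∀ z ∈ s, ε i * f i z ≠ 0 := fun z hz =>
    mul_ne_zero (left_ne_zero_of_mul hxi.ne') (hsf hz i)
  exact lt_of_isPreconnected_of_ne (g := fun z => ε i * f i z) hs
    (continuous_const.mul (hf i)).continuousOn hne hxs hy hxi

lemma signRegion_eq_connectedComponentIn (hf : ∀ i, Continuous (f i))
    (hpre : IsPreconnected (signRegion f ε)) (hx : x ∈ signRegion f ε) :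
    signRegion f ε = connectedComponentIn (nonvanishingLocus f) x :=
  Set.Subset.antisymm
    (hpre.subset_connectedComponentIn hx signRegion_subset_nonvanishingLocus)
    (subset_signRegion_of_isPreconnected hf isPreconnected_connectedComponentIn
      (connectedComponentIn_subset _ _)
      (mem_connectedComponentIn (signRegion_subset_nonvanishingLocus hx)) hx)

theorem bijOn_signRegion_chambers (hf : ∀ i, Continuous (f i))
    (hpre : ∀ ε, IsPreconnected (signRegion f ε)) :
    Set.BijOn (signRegion f) (consistentSignVectors f) (chambers f) := by
  refine ⟨?mapsTo, injOn_signRegion_consistentSignVectors, ?surjOn⟩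
  case mapsTo =>
    rintro ε ⟨-, x, hx⟩
    exact ⟨x, signRegion_subset_nonvanishingLocus hx,
      signRegion_eq_connectedComponentIn hf (hpre ε) hx⟩
  case surjOn =>
    rintro _ ⟨x, hx, rfl⟩
    exact ⟨_, sign_mem_consistentSignVectors hx,
      signRegion_eq_connectedComponentIn hf (hpre _) (mem_signRegion_sign hx)⟩

end Functions

lemma convex_signRegion {ι E : Type*} [AddCommGroup E] [Module ℝ E] (α : ι → E →ᵃ[ℝ] ℝ)
    (ε : ι → ℝ) : Convex ℝ (signRegion (fun i => α i) ε) :=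
  convex_iInter fun i => (convex_Ioi (0 : ℝ)).affine_preimage (ε i • α i)

theorem consistent_signVectors_biject_chambers_general {ι E : Type*} [AddCommGroup E] [Module ℝ E]
    [TopologicalSpace E] [ContinuousAdd E] [ContinuousSMul ℝ E] (α : ι → E →ᴬ[ℝ] ℝ) :
    Set.BijOn (signRegion fun i => α i) (consistentSignVectors fun i => α i)
      (chambers fun i => α i) :=
  bijOn_signRegion_chambers (fun i => (α i).continuous) fun ε =>
    (convex_signRegion (fun i => (α i : E →ᵃ[ℝ] ℝ)) ε).isPreconnected

/-- The map `ε ↦ ⋂ i, H_i^{ε_i}` is a bijection from the set of consistent sign vectors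
onto the set of chambers. -/
theorem consistent_signVectors_biject_chambers (ℓ n : ℕ) (α : Fin n → (Vsp ℓ →ₗ[ℝ] ℝ))
    (hα : ∀ i, α i ≠ 0)
    (hess : (⋂ i, (LinearMap.ker (α i) : Set (Vsp ℓ))) = {0}) :
    (∀ ε ∈ {ε : Fin n → ℝ | (∀ i, ε i = 1 ∨ ε i = -1) ∧
        (⋂ i, {x : Vsp ℓ | 0 < ε i * α i x}).Nonempty},
      IsChamber α (⋂ i, {x : Vsp ℓ | 0 < ε i * α i x})) ∧
    Set.BijOn (fun ε : Fin n → ℝ => ⋂ i, {x : Vsp ℓ | 0 < ε i * α i x})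
      {ε : Fin n → ℝ | (∀ i, ε i = 1 ∨ ε i = -1) ∧
        (⋂ i, {x : Vsp ℓ | 0 < ε i * α i x}).Nonempty}
      {C : Set (Vsp ℓ) | IsChamber α C} := by
  have hbij := consistent_signVectors_biject_chambers_general fun i =>
    (LinearMap.toContinuousLinearMap (α i)).toContinuousAffineMap
  exact ⟨hbij.mapsTo, hbij⟩
end
end

section
/- A consistent system of half-spaces has a unique sink, namely the intersection of its half-spaces. Precisely: let α_1,…,α_n be nonzero linear forms on ℝ^ℓ with ⋂_{i=1}^n ker α_i = {0} and ε ∈ {+1,−1}^n with ⋂_{i=1}^n H_i^{ε_i} ≠ ∅. Then the chamber C₀ = ⋂_{i=1}^n H_i^{ε_i} is a sink for h(ε), and any chamber that is a sink for h(ε) equals C₀. -/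
noncomputable section

/-- `H_i = ker (α i)` is a wall of the chamber `C`:
`closure C ∩ H_i` spans `H_i` (equivalently, it has nonempty interior relative to `H_i`). -/
def IsWall {ℓ n : ℕ} (α : Fin n → (Vsp ℓ →ₗ[ℝ] ℝ)) (i : Fin n) (C : Set (Vsp ℓ)) : Prop :=
  Submodule.span ℝ (closure C ∩ {x | α i x = 0}) = LinearMap.ker (α i)

/-- `C` is a sink for the system of half-spaces determined by `ε`. -/
def IsSink {ℓ n : ℕ} (α : Fin n → (Vsp ℓ →ₗ[ℝ] ℝ)) (ε : Fin n → ℝ)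
    (C : Set (Vsp ℓ)) : Prop :=
  ∀ i : Fin n, IsWall α i C → C ⊆ {x | 0 < ε i * α i x}

/-!
Write a chamber as an open polyhedral cone and discard half-spaces until none is redundant. If the
half-space of `H` cannot be discarded, some point `w` violates only that inequality; joining `w` to
a point of the cone crosses `H` at a point where every other remaining inequality is strict, so `H`
is a wall. Hence a chamber is cut out by the half-spaces of its walls. A sink lies on the prescribed
side of each of its walls, so every solution of the system satisfies these wall inequalities and
therefore lies in the sink.
-/

open Set

namespace HyperplaneArrangement

variable {ι E : Type*} [AddCommGroup E] [Module ℝ E]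

section OpenCone

/-- The open polyhedral cone cut out by the half-spaces `0 < β j` with `j ∈ J`. The index set `J`
is explicit so that redundant half-spaces can be discarded without changing the family `β`. -/
def openCone (β : ι → E →ₗ[ℝ] ℝ) (J : Set ι) : Set E := {y | ∀ j ∈ J, 0 < β j y}

variable {β : ι → E →ₗ[ℝ] ℝ} {J K : Set ι} {k : ι} {x : E}

theorem openCone_anti (β : ι → E →ₗ[ℝ] ℝ) (hKJ : K ⊆ J) : openCone β J ⊆ openCone β K :=
  fun _ hy k hk => hy k (hKJ hk)

theorem convex_openCone (β : ι → E →ₗ[ℝ] ℝ) (J : Set ι) : Convex ℝ (openCone β J) := by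
  simp only [openCone, ofPred_forall]
  exact convex_iInter₂ fun j _ => convex_halfSpace_gt (β j).isLinear 0

theorem exists_openCone_eq_irredundant [Finite ι] (β : ι → E →ₗ[ℝ] ℝ) (J : Set ι) :
    ∃ K ⊆ J, openCone β K = openCone β J ∧
      ∀ k ∈ K, ¬ openCone β (K \ {k}) ⊆ openCone β K := by
  obtain ⟨K, hKJ, hK⟩ :=
    exists_minimal_le_of_wellFoundedLT (fun K => openCone β K = openCone β J) J rfl
  refine ⟨K, hKJ, hK.prop, fun k hk hsub => ?_⟩
  have heq : openCone β (K \ {k}) = openCone β K :=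
    hsub.antisymm (openCone_anti β sdiff_subset)
  exact (hK.le_of_le (heq.trans hK.prop) sdiff_subset hk).2 rfl

theorem exists_mem_openCone_sdiff_singleton_apply_eq_zero (hx : x ∈ openCone β J) (hk : k ∈ J)
    (hirr : ¬ openCone β (J \ {k}) ⊆ openCone β J) :
    ∃ z ∈ openCone β (J \ {k}), β k z = 0 := by
  obtain ⟨w, hw, hwJ⟩ := not_subset.mp hirr
  have hwk : β k w ≤ 0 := by
    by_contra! hpos
    refine hwJ fun j hj => ?_
    by_cases hjk : j = k
    · exact hjk ▸ hpos
    · exact hw j ⟨hj, hjk⟩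
  -- A positive multiple of the point where the segment from `w` to `x` meets `ker (β k)`.
  refine ⟨β k x • w - β k w • x, fun j hj => ?_, by simp [mul_comm]⟩
  have hw_pos : 0 < β k x * β j w := mul_pos (hx k hk) (hw j hj)
  have hx_nonpos : β k w * β j x ≤ 0 := mul_nonpos_of_nonpos_of_nonneg hwk (hx j hj.1).le
  simpa using hx_nonpos.trans_lt hw_pos

end OpenCone

section Wall

variable [TopologicalSpace E]

/-- The hyperplane `ker φ` is a wall of `C`: its part in the closure of `C` spans it, where the
span is algebraic even if `E` is infinite-dimensional. -/
def IsWall (φ : E →ₗ[ℝ] ℝ) (C : Set E) : Prop :=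
  Submodule.span ℝ (closure C ∩ {x | φ x = 0}) = LinearMap.ker φ

theorem isWall_smul_iff {c : ℝ} (hc : c ≠ 0) (φ : E →ₗ[ℝ] ℝ) (C : Set E) :
    IsWall (c • φ) C ↔ IsWall φ C := by
  simp [IsWall, LinearMap.ker_smul φ c hc, hc]

variable [ContinuousAdd E] [ContinuousSMul ℝ E]
variable {β : ι → E →ₗ[ℝ] ℝ} {J : Set ι} {k : ι} {x z w q : E}

theorem mem_closure_openCone (hx : x ∈ openCone β J) (hw : ∀ j ∈ J, 0 ≤ β j w) :
    w ∈ closure (openCone β J) := by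
  have hsub : openSegment ℝ w x ⊆ openCone β J := by
    rintro _ ⟨a, b, ha, hb, -, rfl⟩ j hj
    have hw_nonneg : 0 ≤ a * β j w := mul_nonneg ha.le (hw j hj)
    have hx_pos : 0 < b * β j x := mul_pos hb (hx j hj)
    simpa using add_pos_of_nonneg_of_pos hw_nonneg hx_pos
  exact closure_mono hsub (segment_subset_closure_openSegment (left_mem_segment ℝ w x))

theorem isWall_openCone_of_mem_sdiff_singleton (hJ : J.Finite) (hx : x ∈ openCone β J)
    (hz : z ∈ openCone β (J \ {k})) (hzk : β k z = 0) : IsWall (β k) (openCone β J) := by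
  refine le_antisymm (Submodule.span_le.mpr fun w hw => hw.2) fun v (hv : β k v = 0) => ?_
  have mem_span : ∀ w, β k w = 0 → (∀ j ∈ J \ {k}, 0 ≤ β j w) →
      w ∈ Submodule.span ℝ (closure (openCone β J) ∩ {y | β k y = 0}) := by
    refine fun w hwk hw => Submodule.subset_span ⟨mem_closure_openCone hx fun j hj => ?_, hwk⟩
    by_cases hjk : j = k
    · exact hjk ▸ hwk.ge
    · exact hw j ⟨hj, hjk⟩
  obtain ⟨r, hr⟩ : ∃ r : ℝ, ∀ j ∈ J \ {k}, -β j v ≤ r * β j z := by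
    refine (((Filter.eventually_all_finite hJ.sdiff).mpr fun j hj => ?_).exists (f := Filter.atTop))
    exact (Filter.tendsto_id.atTop_mul_const (hz j hj)).eventually_ge_atTop (-β j v)
  have hz_mem := mem_span z hzk fun j hj => (hz j hj).le
  have hrzv_mem := mem_span (r • z + v) (by simp [hzk, hv]) fun j hj => by
    simpa [neg_le_iff_add_nonneg] using hr j hj
  simpa using Submodule.sub_mem _ hrzv_mem (Submodule.smul_mem _ r hz_mem)

theorem mem_openCone_of_forall_isWall_pos [Finite ι] (hx : x ∈ openCone β J)
    (hq : ∀ j ∈ J, IsWall (β j) (openCone β J) → 0 < β j q) : q ∈ openCone β J := by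
  obtain ⟨K, hKJ, hK, hirr⟩ := exists_openCone_eq_irredundant β J
  rw [← hK] at hx hq ⊢
  intro k hk
  obtain ⟨z, hz, hzk⟩ := exists_mem_openCone_sdiff_singleton_apply_eq_zero hx hk (hirr k hk)
  exact hq k (hKJ hk) (isWall_openCone_of_mem_sdiff_singleton K.toFinite hx hz hzk)

end Wall

section Chamber

/-- The complement of the union of the hyperplanes `ker (α i)`, for an arbitrary real vector
space and index type. -/
def complement (α : ι → E →ₗ[ℝ] ℝ) : Set E := {x | ∀ i, α i x ≠ 0}

variable [TopologicalSpace E]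

/-- The chambers of the arrangement of the hyperplanes `ker (α i)`: the connected components of
its complement. -/
def IsChamber (α : ι → E →ₗ[ℝ] ℝ) (C : Set E) : Prop :=
  ∃ x ∈ complement α, C = connectedComponentIn (complement α) x

/-- `C` is a sink for the half-spaces `0 < ε i * α i`: it lies in the half-space of each of its
walls. The weights `ε i` may be any reals. -/
def IsSink (α : ι → E →ₗ[ℝ] ℝ) (ε : ι → ℝ) (C : Set E) : Prop :=
  ∀ i, IsWall (α i) C → C ⊆ {x | 0 < ε i * α i x}

variable [ContinuousAdd E] [ContinuousSMul ℝ E]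
variable {α : ι → E →ₗ[ℝ] ℝ} {ε : ι → ℝ} {x p : E}

theorem connectedComponentIn_complement_eq_openCone (hα : ∀ i, Continuous (α i))
    (hp : p ∈ openCone (fun i => ε i • α i) univ) :
    connectedComponentIn (complement α) p = openCone (fun i => ε i • α i) univ := by
  have hsub : openCone (fun i => ε i • α i) univ ⊆ complement α :=
    fun y hy i => right_ne_zero_of_mul (hy i trivial).ne'
  refine Subset.antisymm (fun y hy i _ => ?_)
    ((convex_openCone _ _).isPreconnected.subset_connectedComponentIn hp hsub)
  by_contra! hneg
  obtain ⟨w, hw, hw_zero⟩ := isPreconnected_connectedComponentIn.intermediate_value hy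
    (mem_connectedComponentIn (hsub hp)) ((hα i).const_smul (ε i)).continuousOn
    ⟨hneg, (hp i trivial).le⟩
  have hε : ε i ≠ 0 := left_ne_zero_of_mul (hp i trivial).ne'
  exact connectedComponentIn_subset _ _ hw i ((smul_eq_zero.mp hw_zero).resolve_left hε)

theorem IsSink.mem_connectedComponentIn [Finite ι] (hα : ∀ i, Continuous (α i))
    (hx : x ∈ complement α) (hsink : IsSink α ε (connectedComponentIn (complement α) x))
    (hp : ∀ i, 0 < ε i * α i p) : p ∈ connectedComponentIn (complement α) x := by
  have hx_self : x ∈ openCone (fun i => α i x • α i) univ := fun i _ => mul_self_pos.mpr (hx i)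
  have hcomp := connectedComponentIn_complement_eq_openCone hα hx_self
  rw [hcomp] at hsink ⊢
  refine mem_openCone_of_forall_isWall_pos hx_self fun i _ hwall => ?_
  have hxi : 0 < ε i * α i x := hsink i ((isWall_smul_iff (hx i) _ _).mp hwall) hx_self
  have hprod : 0 < ε i ^ 2 * (α i x * α i p) := by
    linear_combination mul_pos hxi (hp i)
  exact pos_of_mul_pos_right hprod (sq_nonneg (ε i))

end Chamber

end HyperplaneArrangement

open HyperplaneArrangement in
theorem consistent_unique_sink_general {ι E : Type*} [Finite ι] [AddCommGroup E] [Module ℝ E]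
    [TopologicalSpace E] [ContinuousAdd E] [ContinuousSMul ℝ E] (α : ι → E →ₗ[ℝ] ℝ)
    (hα : ∀ i, Continuous (α i)) (ε : ι → ℝ)
    (hcons : (⋂ i, {x : E | 0 < ε i * α i x}).Nonempty) :
    HyperplaneArrangement.IsChamber α (⋂ i, {x : E | 0 < ε i * α i x}) ∧
    HyperplaneArrangement.IsSink α ε (⋂ i, {x : E | 0 < ε i * α i x}) ∧
    ∀ C : Set E, HyperplaneArrangement.IsChamber α C → HyperplaneArrangement.IsSink α ε C →
      C = ⋂ i, {x : E | 0 < ε i * α i x} := by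
  have hcone : ⋂ i, {x : E | 0 < ε i * α i x} = openCone (fun i => ε i • α i) univ := by
    ext; simp [openCone]
  obtain ⟨p, hp⟩ := hcons
  have hp_pos : ∀ i, 0 < ε i * α i p := mem_iInter.mp hp
  have hcomp : connectedComponentIn (complement α) p = ⋂ i, {x : E | 0 < ε i * α i x} :=
    hcone ▸ connectedComponentIn_complement_eq_openCone hα (hcone ▸ hp)
  refine ⟨⟨p, fun i => right_ne_zero_of_mul (hp_pos i).ne', hcomp.symm⟩,
    fun i _ => iInter_subset _ i, ?_⟩
  rintro _ ⟨x, hx, rfl⟩ hsink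
  exact (connectedComponentIn_eq (hsink.mem_connectedComponentIn hα hx hp_pos)).trans hcomp

/-- A consistent system of half-spaces has a unique sink, namely the intersection
of its half-spaces. -/
theorem consistent_unique_sink (ℓ n : ℕ) (α : Fin n → (Vsp ℓ →ₗ[ℝ] ℝ))
    (hα : ∀ i, α i ≠ 0)
    (hess : (⋂ i, (LinearMap.ker (α i) : Set (Vsp ℓ))) = {0})
    (ε : Fin n → ℝ) (hε : ∀ i, ε i = 1 ∨ ε i = -1)
    (hcons : (⋂ i, {x : Vsp ℓ | 0 < ε i * α i x}).Nonempty) :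
    IsChamber α (⋂ i, {x : Vsp ℓ | 0 < ε i * α i x}) ∧
    IsSink α ε (⋂ i, {x : Vsp ℓ | 0 < ε i * α i x}) ∧
    ∀ C : Set (Vsp ℓ), IsChamber α C → IsSink α ε C →
      C = ⋂ i, {x : Vsp ℓ | 0 < ε i * α i x} :=
  consistent_unique_sink_general α (fun i => (α i).continuous_of_finiteDimensional) ε hcons
end
end

section
/- A locally consistent system of half-spaces admits a compatible vector field on the unit sphere. Precisely: let α_1,…,α_n be nonzero linear forms on ℝ^ℓ with ⋂_{i=1}^n ker α_i = {0}, and let ε ∈ {+1,−1}^n be such that for every intersection X = ⋂_{i∈I} ker α_i with X ≠ {0}, one has ⋂_{i : X ⊆ ker α_i} H_i^{ε_i} ≠ ∅. Then there exists a continuous map θ : S^{ℓ−1} → ℝ^ℓ such that for every x ∈ S^{ℓ−1} and every i with α_i(x) = 0, one has ε_i·α_i(θ(x)) > 0. -/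
noncomputable section

/-- The system of half-spaces determined by `ε` is consistent at the intersection
`X = ⋂ i ∈ I, ker (α i)`: the intersection of the half-spaces of all hyperplanes
containing `X` is nonempty. -/
def ConsistentAt {ℓ n : ℕ} (α : Fin n → (Vsp ℓ →ₗ[ℝ] ℝ)) (ε : Fin n → ℝ)
    (I : Finset (Fin n)) : Prop :=
  {x : Vsp ℓ | ∀ j : Fin n,
      (⋂ i ∈ I, (LinearMap.ker (α i) : Set (Vsp ℓ))) ⊆ (LinearMap.ker (α j) : Set (Vsp ℓ)) →
      0 < ε j * α j x}.Nonempty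

/-- The system of half-spaces is locally consistent: it is consistent at every
nonzero intersection of hyperplanes. -/
def LocallyConsistent {ℓ n : ℕ} (α : Fin n → (Vsp ℓ →ₗ[ℝ] ℝ)) (ε : Fin n → ℝ) : Prop :=
  ∀ I : Finset (Fin n),
    (⋂ i ∈ I, (LinearMap.ker (α i) : Set (Vsp ℓ))) ≠ {0} → ConsistentAt α ε I

/-- The intersection of the hyperplanes through a nonzero point `x` contains `x`, so it is one of
the nonzero intersections at which the system is assumed consistent. -/
theorem LocallyConsistent.exists_forall_pos {ℓ n : ℕ} {α : Fin n → (Vsp ℓ →ₗ[ℝ] ℝ)}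
    {ε : Fin n → ℝ} (hloc : LocallyConsistent α ε) {x : Vsp ℓ} (hx : x ≠ 0) :
    ∃ v : Vsp ℓ, ∀ i, α i x = 0 → 0 < ε i * α i v := by
  let I : Finset (Fin n) := {i | α i x = 0}
  have mem_I {i : Fin n} : i ∈ I ↔ α i x = 0 := Finset.mem_filter_univ i
  have x_mem : x ∈ ⋂ i ∈ I, (LinearMap.ker (α i) : Set (Vsp ℓ)) :=
    Set.mem_iInter₂.2 fun _ hi => mem_I.1 hi
  obtain ⟨v, hv⟩ : ConsistentAt α ε I := hloc I fun hzero => hx (by rwa [hzero] at x_mem)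
  exact ⟨v, fun i hi => hv i (Set.biInter_subset_of_mem (mem_I.2 hi))⟩

/-- By local finiteness, a point near `x` lies only in those `H i` that contain `x`. Hence an
admissible value at `x` stays admissible near `x`, and constant local solutions glue along a
partition of unity because the constraints are convex. -/
theorem exists_compatible_vector_field_general {X E ι : Type*} [TopologicalSpace X]
    [NormalSpace X] [ParacompactSpace X] [AddCommGroup E] [Module ℝ E] [TopologicalSpace E]
    [ContinuousAdd E] [ContinuousSMul ℝ E] {H : ι → Set X} (hfin : LocallyFinite H)
    (hclosed : ∀ i, IsClosed (H i)) {C : ι → Set E} (hconv : ∀ i, Convex ℝ (C i))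
    (hC : ∀ x, ∃ v, ∀ i, x ∈ H i → v ∈ C i) :
    ∃ θ : C(X, E), ∀ x i, x ∈ H i → θ x ∈ C i := by
  suffices ∃ θ : C(X, E), ∀ x, θ x ∈ ⋂ (i) (_ : x ∈ H i), C i by
    simpa only [Set.mem_iInter₂] using this
  refine exists_continuous_forall_mem_convex_of_local_const
    (fun x => convex_iInter₂ fun i _ => hconv i) fun x => ?_
  obtain ⟨v, hv⟩ := hC x
  refine ⟨v, (hfin.eventually_subset hclosed x).mono fun y hy => ?_⟩
  exact Set.mem_iInter₂.2 fun i hi => hv i (hy hi)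

/-- A locally consistent system of half-spaces admits a compatible vector field
on the unit sphere. -/
theorem exists_compatible_vector_field (ℓ n : ℕ) (α : Fin n → (Vsp ℓ →ₗ[ℝ] ℝ))
    (hα : ∀ i, α i ≠ 0)
    (hess : (⋂ i, (LinearMap.ker (α i) : Set (Vsp ℓ))) = {0})
    (ε : Fin n → ℝ) (hε : ∀ i, ε i = 1 ∨ ε i = -1)
    (hloc : LocallyConsistent α ε) :
    ∃ θ : Metric.sphere (0 : Vsp ℓ) 1 → Vsp ℓ, Continuous θ ∧
      ∀ x : Metric.sphere (0 : Vsp ℓ) 1, ∀ i : Fin n,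
        α i (x : Vsp ℓ) = 0 → 0 < ε i * α i (θ x) := by
  have isClosed_hyperplane (i : Fin n) :
      IsClosed {x : Metric.sphere (0 : Vsp ℓ) 1 | α i x = 0} :=
    isClosed_eq ((α i).continuous_of_finiteDimensional.comp continuous_subtype_val)
      continuous_const
  have convex_halfSpace (i : Fin n) : Convex ℝ {v | 0 < ε i * α i v} :=
    convex_halfSpace_gt (ε i • α i).isLinear 0
  obtain ⟨θ, hθ⟩ := exists_compatible_vector_field_general (locallyFinite_of_finite _)
    isClosed_hyperplane convex_halfSpace
    fun x => hloc.exists_forall_pos (ne_zero_of_mem_unit_sphere x)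
  exact ⟨θ, θ.continuous, hθ⟩
end
end

section
/- The homotopy class of the shifted sphere does not depend on the choice of compatible vector field. Precisely: let α_1,…,α_n be nonzero linear forms on ℝ^ℓ with ⋂_{i=1}^n ker α_i = {0} and ε ∈ {+1,−1}^n. If θ_0, θ_1 : S^{ℓ−1} → ℝ^ℓ are both continuous and compatible with h(ε), then the maps f_{θ_0}, f_{θ_1} : S^{ℓ−1} → M(A), f_{θ_j}(x) = x + √−1·θ_j(x), are homotopic as maps into M(A) (via the linear homotopy θ_t = (1−t)θ_0 + tθ_1). -/
noncomputable section

/-- The point `x + √-1 · v` of `ℂ^ℓ` determined by the real vectors `x, v`. -/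
def cplx {ℓ : ℕ} (x v : Vsp ℓ) : Fin ℓ → ℂ :=
  fun j => (x j : ℂ) + Complex.I * (v j : ℂ)

/-- The `ℂ`-linear extension of a real linear form, evaluated at `z ∈ ℂ^ℓ`:
`α^ℂ(z) = α(Re z) + √-1 · α(Im z)`. -/
def cLin {ℓ : ℕ} (α : Vsp ℓ →ₗ[ℝ] ℝ) (z : Fin ℓ → ℂ) : ℂ :=
  (α (WithLp.toLp 2 (fun j => (z j).re)) : ℂ) + Complex.I * (α (WithLp.toLp 2 (fun j => (z j).im)) : ℂ)

/-- The complexified complement `M(A) ⊆ ℂ^ℓ`. -/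
def MA {ℓ n : ℕ} (α : Fin n → (Vsp ℓ →ₗ[ℝ] ℝ)) : Set (Fin ℓ → ℂ) :=
  {z | ∀ i, cLin (α i) z ≠ 0}

/-!
The points `x + √-1 · v` with `α i v` of the prescribed sign `ε i` whenever `α i x = 0` all lie in
`M(A)`, and for fixed `x` the admissible `v` form an intersection of open half-spaces, hence a
convex set. So the segment joining `x + √-1 · θ₀(x)` to `x + √-1 · θ₁(x)` stays inside `M(A)`, and
the straight-line homotopy does too.
-/

theorem homotopic_of_segment_subset {X E : Type*} [TopologicalSpace X] [AddCommGroup E]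
    [TopologicalSpace E] [IsTopologicalAddGroup E] [Module ℝ E] [ContinuousSMul ℝ E] {s : Set E}
    {f₀ f₁ : C(X, s)} (h : ∀ x, segment ℝ (f₀ x : E) (f₁ x) ⊆ s) : f₀.Homotopic f₁ := by
  let inclusion : C(s, E) := ⟨Subtype.val, continuous_subtype_val⟩
  let H := ContinuousMap.Homotopy.affine (inclusion.comp f₀) (inclusion.comp f₁)
  have hH (p : unitInterval × X) : H p ∈ s := by
    apply h p.2
    rw [segment_eq_image_lineMap]
    exact ⟨p.1, p.1.2, rfl⟩
  exact ⟨{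
    toFun p := ⟨H p, hH p⟩
    continuous_toFun := H.continuous.subtype_mk hH
    map_zero_left x := Subtype.ext (H.map_zero_left x)
    map_one_left x := Subtype.ext (H.map_one_left x) }⟩

section CompatibleShifts

variable {ι E : Type*} [AddCommMonoid E] [Module ℝ E]

/-- The vectors `v` by which the point `x` may be shifted in the imaginary direction: those on the
`ε i`-side of every hyperplane `ker (α i)` through `x`. A vector field `θ` is compatible with
`h(ε)` when `θ x ∈ compatibleShifts α ε x` for all `x`; the weights `ε i` are allowed to be
arbitrary reals. -/
def compatibleShifts (α : ι → E →ₗ[ℝ] ℝ) (ε : ι → ℝ) (x : E) : Set E :=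
  {v | ∀ i, α i x = 0 → 0 < ε i * α i v}

theorem convex_compatibleShifts (α : ι → E →ₗ[ℝ] ℝ) (ε : ι → ℝ) (x : E) :
    Convex ℝ (compatibleShifts α ε x) := by
  simp only [compatibleShifts, Set.ofPred_forall]
  exact convex_iInter₂ fun i _ ↦ convex_halfSpace_gt (ε i • α i).isLinear 0

end CompatibleShifts

section Complexification

variable {ℓ n : ℕ}

theorem cLin_cplx (β : Vsp ℓ →ₗ[ℝ] ℝ) (x v : Vsp ℓ) :
    cLin β (cplx x v) = β x + Complex.I * β v := by
  simp [cLin, cplx]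

theorem cplx_mem_MA_iff {α : Fin n → Vsp ℓ →ₗ[ℝ] ℝ} {x v : Vsp ℓ} :
    cplx x v ∈ MA α ↔ ∀ i, α i x = 0 → α i v ≠ 0 := by
  simp [MA, cLin_cplx, Complex.ext_iff]

theorem cplx_mem_MA_of_mem_compatibleShifts {α : Fin n → Vsp ℓ →ₗ[ℝ] ℝ} {ε : Fin n → ℝ}
    {x v : Vsp ℓ} (hv : v ∈ compatibleShifts α ε x) : cplx x v ∈ MA α :=
  cplx_mem_MA_iff.2 fun i hi ↦ right_ne_zero_of_mul (hv i hi).ne'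

theorem cplx_lineMap (x v w : Vsp ℓ) (t : ℝ) :
    cplx x (AffineMap.lineMap v w t) = AffineMap.lineMap (cplx x v) (cplx x w) t := by
  ext j
  simp only [cplx, AffineMap.lineMap_apply_module, PiLp.add_apply, PiLp.smul_apply, Pi.add_apply,
    Pi.smul_apply, smul_eq_mul, Complex.real_smul]
  push_cast
  ring

theorem image_cplx_segment (x v w : Vsp ℓ) :
    cplx x '' segment ℝ v w = segment ℝ (cplx x v) (cplx x w) := by
  simp only [segment_eq_image_lineMap, Set.image_image, cplx_lineMap]

theorem segment_cplx_subset_MA {α : Fin n → Vsp ℓ →ₗ[ℝ] ℝ} {ε : Fin n → ℝ} {x v w : Vsp ℓ}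
    (hv : v ∈ compatibleShifts α ε x) (hw : w ∈ compatibleShifts α ε x) :
    segment ℝ (cplx x v) (cplx x w) ⊆ MA α := by
  rw [← image_cplx_segment, Set.image_subset_iff]
  intro u hu
  exact cplx_mem_MA_of_mem_compatibleShifts
    ((convex_compatibleShifts α ε x).segment_subset hv hw hu)

theorem shifted_sphere_homotopy_class_independent_general {X : Type*} [TopologicalSpace X]
    {α : Fin n → Vsp ℓ →ₗ[ℝ] ℝ} {ε : Fin n → ℝ} {g θ₀ θ₁ : X → Vsp ℓ}
    (hcomp₀ : ∀ x, θ₀ x ∈ compatibleShifts α ε (g x))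
    (hcomp₁ : ∀ x, θ₁ x ∈ compatibleShifts α ε (g x))
    {f₀ f₁ : C(X, MA α)} (hf₀ : ∀ x, (f₀ x : Fin ℓ → ℂ) = cplx (g x) (θ₀ x))
    (hf₁ : ∀ x, (f₁ x : Fin ℓ → ℂ) = cplx (g x) (θ₁ x)) :
    f₀.Homotopic f₁ := by
  refine homotopic_of_segment_subset fun x ↦ ?_
  rw [hf₀, hf₁]
  exact segment_cplx_subset_MA (hcomp₀ x) (hcomp₁ x)

end Complexification

/-- The homotopy class of the shifted sphere does not depend on the choice of the
compatible vector field: the maps `f_{θ₀}` and `f_{θ₁}` are homotopic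
as maps into `M(A)`. -/
theorem shifted_sphere_homotopy_class_independent (ℓ n : ℕ)
    (α : Fin n → (Vsp ℓ →ₗ[ℝ] ℝ))
    (hα : ∀ i, α i ≠ 0)
    (hess : (⋂ i, (LinearMap.ker (α i) : Set (Vsp ℓ))) = {0})
    (ε : Fin n → ℝ) (hε : ∀ i, ε i = 1 ∨ ε i = -1)
    (θ₀ θ₁ : Metric.sphere (0 : Vsp ℓ) 1 → Vsp ℓ)
    (hθ₀ : Continuous θ₀) (hθ₁ : Continuous θ₁)
    (hcomp₀ : ∀ x : Metric.sphere (0 : Vsp ℓ) 1, ∀ i : Fin n,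
      α i (x : Vsp ℓ) = 0 → 0 < ε i * α i (θ₀ x))
    (hcomp₁ : ∀ x : Metric.sphere (0 : Vsp ℓ) 1, ∀ i : Fin n,
      α i (x : Vsp ℓ) = 0 → 0 < ε i * α i (θ₁ x)) :
    ∀ f₀ f₁ : C(Metric.sphere (0 : Vsp ℓ) 1, MA α),
      (∀ x, (f₀ x : Fin ℓ → ℂ) = cplx (x : Vsp ℓ) (θ₀ x)) →
      (∀ x, (f₁ x : Fin ℓ → ℂ) = cplx (x : Vsp ℓ) (θ₁ x)) →
      f₀.Homotopic f₁ := by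
  intro f₀ f₁ hf₀ hf₁
  exact shifted_sphere_homotopy_class_independent_general hcomp₀ hcomp₁ hf₀ hf₁
end
end

section
/- In the group G presented by generators γ_1,…,γ_6 subject to the relations [γ_2,γ_3] = [γ_4,γ_5] = [γ_2,γ_5] = [γ_1,γ_6] = [γ_3,γ_6] = [γ_1,γ_4] = 1, γ_1γ_3γ_5 = γ_3γ_5γ_1 = γ_5γ_1γ_3, and γ_2γ_4γ_6 = γ_4γ_6γ_2 = γ_6γ_2γ_4, the three elements γ_2, [γ_3, γ_4], and γ_5 pairwise commute. -/
noncomputable section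

open FreeGroup
open scoped commutatorElement

/-- Generators `γ_1, …, γ_6` of the free group, indexed by `Fin 6`
(`γ_(i+1)` corresponds to index `i`). -/
def gen (i : Fin 6) : FreeGroup (Fin 6) := FreeGroup.of i

/-- The relators of the presentation of `π_1(M(X_2))`: the six commutators
`[γ_2,γ_3], [γ_4,γ_5], [γ_2,γ_5], [γ_1,γ_6], [γ_3,γ_6], [γ_1,γ_4]` and the relators
expressing `γ_1γ_3γ_5 = γ_3γ_5γ_1 = γ_5γ_1γ_3` and `γ_2γ_4γ_6 = γ_4γ_6γ_2 = γ_6γ_2γ_4`. -/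
def X2rels : Set (FreeGroup (Fin 6)) :=
  {⁅gen 1, gen 2⁆, ⁅gen 3, gen 4⁆, ⁅gen 1, gen 4⁆,
   ⁅gen 0, gen 5⁆, ⁅gen 2, gen 5⁆, ⁅gen 0, gen 3⁆,
   (gen 0 * gen 2 * gen 4) * (gen 2 * gen 4 * gen 0)⁻¹,
   (gen 0 * gen 2 * gen 4) * (gen 4 * gen 0 * gen 2)⁻¹,
   (gen 1 * gen 3 * gen 5) * (gen 3 * gen 5 * gen 1)⁻¹,
   (gen 1 * gen 3 * gen 5) * (gen 5 * gen 1 * gen 3)⁻¹}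

/-- The group presented by `γ_1, …, γ_6` and the above relators. -/
abbrev X2Group : Type := PresentedGroup X2rels

/-!
A commutator `⁅g, h⁆` does not change when `h` is multiplied on the right by an element commuting
with `g`, nor when `g` is multiplied on the right by an element commuting with `h`. Hence
`⁅γ₃, γ₄⁆ = ⁅γ₃, γ₄ * γ₆⁆ = ⁅γ₃ * γ₅ * γ₁, γ₄⁆`. The element `γ₂` commutes with both entries of the
second commutator, and `γ₅` with both entries of the third.
-/

theorem commute_mul_mul_of_cyclic_eq {S : Type*} [Semigroup S] {a b c : S}
    (hleft : a * b * c = b * c * a) (hright : a * b * c = c * a * b) :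
    Commute c (b * c * a) := by
  calc c * (b * c * a) = c * a * b * c := by rw [← hleft]; simp only [mul_assoc]
    _ = b * c * a * c := by rw [← hright, hleft]

section Commutator

variable {G : Type*} [Group G] {g h k : G}

theorem commute_commutatorElement (hg : Commute k g) (hh : Commute k h) : Commute k ⁅g, h⁆ :=
  ((hg.mul_right hh).mul_right hg.inv_right).mul_right hh.inv_right

theorem commutatorElement_mul_right_of_commute (hgk : Commute g k) : ⁅g, h * k⁆ = ⁅g, h⁆ := by
  simp [commutatorElement_mul_right_eq_mul_conj, hgk.commutator_eq]

theorem commutatorElement_mul_left_of_commute (hkh : Commute k h) : ⁅g * k, h⁆ = ⁅g, h⁆ := by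
  simp [commutatorElement_mul_left_eq_conj_mul, hkh.commutator_eq]

end Commutator

theorem presentedGroup_mk_commute_of_mem {α : Type*} {rels : Set (FreeGroup α)}
    {x y : FreeGroup α} (hxy : ⁅x, y⁆ ∈ rels) :
    Commute (PresentedGroup.mk rels x) (PresentedGroup.mk rels y) := by
  rw [← commutatorElement_eq_one_iff_commute, ← map_commutatorElement]
  exact PresentedGroup.one_of_mem hxy

namespace X2Group

local notation "γ₁" => PresentedGroup.of (rels := X2rels) 0
local notation "γ₂" => PresentedGroup.of (rels := X2rels) 1
local notation "γ₃" => PresentedGroup.of (rels := X2rels) 2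
local notation "γ₄" => PresentedGroup.of (rels := X2rels) 3
local notation "γ₅" => PresentedGroup.of (rels := X2rels) 4
local notation "γ₆" => PresentedGroup.of (rels := X2rels) 5

theorem commute_gamma1_gamma4 : Commute γ₁ γ₄ :=
  presentedGroup_mk_commute_of_mem (by simp [X2rels, gen])

theorem commute_gamma2_gamma3 : Commute γ₂ γ₃ :=
  presentedGroup_mk_commute_of_mem (by simp [X2rels, gen])

theorem commute_gamma2_gamma5 : Commute γ₂ γ₅ :=
  presentedGroup_mk_commute_of_mem (by simp [X2rels, gen])

theorem commute_gamma3_gamma6 : Commute γ₃ γ₆ :=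
  presentedGroup_mk_commute_of_mem (by simp [X2rels, gen])

theorem commute_gamma4_gamma5 : Commute γ₄ γ₅ :=
  presentedGroup_mk_commute_of_mem (by simp [X2rels, gen])

theorem commute_gamma2_gamma4_mul_gamma6 : Commute γ₂ (γ₄ * γ₆) := by
  have cyclic : γ₂ * γ₄ * γ₆ = γ₄ * γ₆ * γ₂ :=
    PresentedGroup.mk_eq_mk_of_mul_inv_mem (by simp [X2rels, gen])
  rwa [mul_assoc] at cyclic

theorem commute_gamma5_gamma3_mul_gamma5_mul_gamma1 : Commute γ₅ (γ₃ * γ₅ * γ₁) := by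
  have cyclic_left : γ₁ * γ₃ * γ₅ = γ₃ * γ₅ * γ₁ :=
    PresentedGroup.mk_eq_mk_of_mul_inv_mem (by simp [X2rels, gen])
  have cyclic_right : γ₁ * γ₃ * γ₅ = γ₅ * γ₁ * γ₃ :=
    PresentedGroup.mk_eq_mk_of_mul_inv_mem (by simp [X2rels, gen])
  exact commute_mul_mul_of_cyclic_eq cyclic_left cyclic_right

theorem commute_gamma2_commutator_gamma3_gamma4 : Commute γ₂ ⁅γ₃, γ₄⁆ := by
  have commutator_eq : ⁅γ₃, γ₄ * γ₆⁆ = ⁅γ₃, γ₄⁆ :=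
    commutatorElement_mul_right_of_commute commute_gamma3_gamma6
  rw [← commutator_eq]
  exact commute_commutatorElement commute_gamma2_gamma3 commute_gamma2_gamma4_mul_gamma6

theorem commute_gamma5_commutator_gamma3_gamma4 : Commute γ₅ ⁅γ₃, γ₄⁆ := by
  have commutator_eq : ⁅γ₃ * γ₅ * γ₁, γ₄⁆ = ⁅γ₃, γ₄⁆ := by
    rw [commutatorElement_mul_left_of_commute commute_gamma1_gamma4,
      commutatorElement_mul_left_of_commute commute_gamma4_gamma5.symm]
  rw [← commutator_eq]
  exact commute_commutatorElement commute_gamma5_gamma3_mul_gamma5_mul_gamma1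
    commute_gamma4_gamma5.symm

end X2Group

/-- In the presented group `G`, the three elements `γ_2`, `[γ_3, γ_4]` and `γ_5`
pairwise commute. -/
theorem gamma2_comm34_gamma5_pairwise_commute :
    Commute (PresentedGroup.of (rels := X2rels) 1)
      ⁅PresentedGroup.of (rels := X2rels) 2, PresentedGroup.of (rels := X2rels) 3⁆ ∧
    Commute (PresentedGroup.of (rels := X2rels) 1)
      (PresentedGroup.of (rels := X2rels) 4) ∧
    Commute ⁅PresentedGroup.of (rels := X2rels) 2, PresentedGroup.of (rels := X2rels) 3⁆
      (PresentedGroup.of (rels := X2rels) 4) := by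
  exact ⟨X2Group.commute_gamma2_commutator_gamma3_gamma4, X2Group.commute_gamma2_gamma5,
    X2Group.commute_gamma5_commutator_gamma3_gamma4.symm⟩
end
end
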